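/- The fundamental endomorphism inverts the horizontal derivative (equation (2.17)): Let A be a fanning frame in V with fundamental endomorphism F(t) and horizontal projection P_h(t) = (1/2)(id_V + Ḟ(t)). Then for every smooth curve a : ℝ → V with a(t) ∈ ℓ(t) for all t, and every τ ∈ ℝ: F(τ)(P_h(τ)·ȧ(τ)) = a(τ). Consequently the horizontal derivative H(τ) : ℓ(τ) → h(τ), defined by H(τ)(a(τ)) = P_h(τ)ȧ(τ) for any such section a, is a well-defined linear isomorphism whose inverse is the restriction of F(τ) to h(τ). -/

import Mathlib

/-- **The fundamental endomorphism inverts the horizontal derivative (eq. (2.17)).**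
For a fanning frame `A` with fundamental endomorphism `F(t)` and horizontal projection
`P_h(t) = (1/2)(id + Ḟ(t))`: for every smooth section `a(t) ∈ ℓ(t)` and every `τ`,
`F(τ)(P_h(τ) ȧ(τ)) = a(τ)`.  Consequently the horizontal derivative
`H(τ) : ℓ(τ) → h(τ)`, `a(τ) ↦ P_h(τ) ȧ(τ)`, is well defined: two sections agreeing at
`τ` have the same horizontal derivative there. -/
theorem fundamental_endomorphism_inverts_horizontal_derivative
    {V : Type*} [NormedAddCommGroup V] [NormedSpace ℝ V] [FiniteDimensional ℝ V]
    {n : ℕ} (hn : 0 < n) (hdim : Module.finrank ℝ V = 2 * n)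
    (A A' : ℝ → Fin n → V)
    (hA : ∀ i, ContDiff ℝ (⊤ : ℕ∞) (fun t => A t i))
    (hA' : ∀ i t, HasDerivAt (fun s => A s i) (A' t i) t)
    (hfan : ∀ t, LinearIndependent ℝ (Sum.elim (A t) (A' t)) ∧
      Submodule.span ℝ (Set.range (Sum.elim (A t) (A' t))) = ⊤)
    (F F' : ℝ → V →L[ℝ] V)
    (hF0 : ∀ t i, F t (A t i) = 0)
    (hF1 : ∀ t i, F t (A' t i) = A t i)
    (hFd : ∀ t, HasDerivAt F (F' t) t) :
    (∀ (a a' : ℝ → V), ContDiff ℝ (⊤ : ℕ∞) a →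
      (∀ t, a t ∈ Submodule.span ℝ (Set.range (A t))) →
      (∀ t, HasDerivAt a (a' t) t) →
      ∀ τ, F τ ((1/2 : ℝ) • (a' τ + F' τ (a' τ))) = a τ) ∧
    (∀ (a a' b b' : ℝ → V), ContDiff ℝ (⊤ : ℕ∞) a → ContDiff ℝ (⊤ : ℕ∞) b →
      (∀ t, a t ∈ Submodule.span ℝ (Set.range (A t))) →
      (∀ t, b t ∈ Submodule.span ℝ (Set.range (A t))) →
      (∀ t, HasDerivAt a (a' t) t) → (∀ t, HasDerivAt b (b' t) t) →
      ∀ τ, a τ = b τ →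
        (1/2 : ℝ) • (a' τ + F' τ (a' τ)) = (1/2 : ℝ) • (b' τ + F' τ (b' τ))) := by
  have hFa : ∀ (a a' : ℝ → V), (∀ t, F t (a t) = 0) → (∀ t, HasDerivAt a (a' t) t) →
      ∀ t, F' t (a t) + F t (a' t) = 0 := by
    intro a a' h0 ha t
    have h1 : HasDerivAt (fun s => F s (a s)) (F' t (a t) + F t (a' t)) t :=
      (hFd t).clm_apply (ha t)
    have h2 : (fun s => F s (a s)) = fun _ => (0 : V) := funext h0
    rw [h2] at h1
    exact h1.unique (hasDerivAt_const t (0 : V))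
  have hFl : ∀ t x, x ∈ Submodule.span ℝ (Set.range (A t)) → F t x = 0 := by
    intro t x hx
    induction hx using Submodule.span_induction with
    | mem x hx => obtain ⟨i, rfl⟩ := hx; exact hF0 t i
    | zero => simp
    | add x y _ _ h1 h2 => simp [h1, h2]
    | smul c x _ h => simp [h]
  have hF'l : ∀ t x, x ∈ Submodule.span ℝ (Set.range (A t)) → F' t x = -x := by
    intro t x hx
    induction hx using Submodule.span_induction with
    | mem x hx =>
      obtain ⟨i, rfl⟩ := hx
      have := hFa (fun s => A s i) (fun s => A' s i) (fun s => hF0 s i) (hA' i) t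
      simp only [hF1] at this
      exact eq_neg_of_add_eq_zero_left this
    | zero => simp
    | add x y _ _ h1 h2 => rw [map_add, h1, h2, neg_add]
    | smul c x _ h => rw [map_smul, h, smul_neg]
  have hdec : ∀ t x, ∃ u ∈ Submodule.span ℝ (Set.range (A t)), ∃ c : Fin n → ℝ,
      x = u + ∑ i, c i • A' t i := by
    intro t x
    have hx : x ∈ Submodule.span ℝ (Set.range (Sum.elim (A t) (A' t))) := by
      rw [(hfan t).2]; trivial
    rw [Set.Sum.elim_range, Submodule.span_union, Submodule.mem_sup] at hx
    obtain ⟨u, hu, v, hv, rfl⟩ := hx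
    obtain ⟨c, rfl⟩ := (Submodule.mem_span_range_iff_exists_fun ℝ).1 hv
    exact ⟨u, hu, c, rfl⟩
  have hFc : ∀ t (c : Fin n → ℝ), F t (∑ i, c i • A' t i) = ∑ i, c i • A t i := by
    intro t c
    simp [map_sum, hF1]
  have hFF : ∀ t x, F t (F t x) = 0 := by
    intro t x
    obtain ⟨u, hu, c, rfl⟩ := hdec t x
    rw [map_add, hFl t u hu, zero_add, hFc]
    simp [map_sum, hF0]
  have hker : ∀ t x, F t x = 0 → x ∈ Submodule.span ℝ (Set.range (A t)) := by
    intro t x hx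
    obtain ⟨u, hu, c, rfl⟩ := hdec t x
    rw [map_add, hFl t u hu, zero_add, hFc] at hx
    have hli : LinearIndependent ℝ (A t) := (hfan t).1.comp Sum.inl Sum.inl_injective
    have hc := Fintype.linearIndependent_iff.1 hli c hx
    simpa [hc] using hu
  have hanti : ∀ t x, F' t (F t x) + F t (F' t x) = 0 := by
    intro t x
    refine hFa (fun s => F s x) (fun s => F' s x) (fun s => hFF s x) (fun s => ?_) t
    simpa using (hFd s).clm_apply (hasDerivAt_const s x)
  have hkey : ∀ (a a' : ℝ → V), (∀ t, a t ∈ Submodule.span ℝ (Set.range (A t))) →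
      (∀ t, HasDerivAt a (a' t) t) → ∀ τ, F τ (a' τ) = a τ := by
    intro a a' hl ha τ
    have h := hFa a a' (fun t => hFl t _ (hl t)) ha τ
    rw [hF'l τ _ (hl τ)] at h
    exact (neg_add_eq_zero.1 h).symm
  refine ⟨?_, ?_⟩
  · intro a a' _ hl ha τ
    have h1 := hkey a a' hl ha τ
    have h2 := hanti τ (a' τ)
    rw [h1, hF'l τ _ (hl τ)] at h2
    have h3 : F τ (F' τ (a' τ)) = a τ := (neg_add_eq_zero.1 h2).symm
    rw [map_smul, map_add, h1, h3]
    module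
  · intro a a' b b' _ _ hla hlb ha hb τ hab
    have h1 := hkey a a' hla ha τ
    have h2 := hkey b b' hlb hb τ
    have h3 : F τ (a' τ - b' τ) = 0 := by rw [map_sub, h1, h2, hab, sub_self]
    have h4 := hF'l τ _ (hker τ _ h3)
    rw [map_sub] at h4
    congr 1
    rw [← sub_eq_zero]
    calc _ = (a' τ - b' τ) + (F' τ (a' τ) - F' τ (b' τ)) := by abel
      _ = 0 := by rw [h4]; abel
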